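/- arXiv:0801.2131 — 2 statements merged into one kernel-verified Lean document; each statement's English description precedes it below -/
import Mathlib

section
/- Let X be a hereditarily Baire Preiss-Simon topological space and Y a regular Hausdorff space. Then every weakly Gδ-measurable map f : X → Y is scatteredly continuous. -/
/-!
Call a set `A` *nowhere continuous* if `f|A` has no point of continuity, and suppose a nonempty such
set exists.  Preiss-Simon spaces are countably tight, so `A` may be taken countable.

Baire category enters twice, always through the closure of a countable set.
* If countable sets `P`, `Q` are dense in each other, their images do not lie in disjoint open sets:
  by countable additivity of the base, the preimages of suitable disjoint basic sets would be
  disjoint dense `Gδ`-sets in `closure P` (`not_separated`).  Hence a countable nowhere continuous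
  set is not the union of two sets on which `f` is scatteredly continuous (`NonNull.union`).  The
  proof uses that a scatteredly continuous map into a regular space is continuous on a nonempty
  relatively open set (`exists_open_continuousOn`).
* If `S = {x k}` is countable and `W k` is an open neighbourhood of `f (x k)`, then `S` minus
  `f ⁻¹' closure (W j)` fails to be dense in `S` for some `j` (`no_spread_sequence`): the union of
  the preimages of the `W k` contains a dense `Gδ`-subset of `closure S`, so one of them is somewhere
  dense, and the argument of the first point applies to it there.

The second fact is contradicted by a sequence built in a decreasing chain of nowhere continuous
sets `A k`: points `x k ∈ A k`, open `W k ∋ f (x k)`, with `A (k + 1)` disjoint from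
`f ⁻¹' closure (W k)` and with every earlier `x i` a limit of later `x k`.  To keep `x i`
approachable, the Preiss-Simon property supplies open sets `V i m` whose traces on `A (i + 1)`
converge to `x i`, and the construction maintains that infinitely many `V i m` meet the current
`A k`.  In one step (`exists_step`), each `i` forbids at most one value of `f (x k)`, by
`NonNull.union`, and finitely many forbidden values can be avoided, again by `NonNull.union`.
-/

open Set Topology

/-- A map `f : X → Y` is *weakly Gδ-measurable* if there is a regular countably additive
base `B` of the topology of `Y` such that the preimage of each member of `B` is a
`Gδ`-set in `X`. -/
def WeaklyGdeltaMeasurable {X Y : Type*} [TopologicalSpace X] [TopologicalSpace Y]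
    (f : X → Y) : Prop :=
  ∃ B : Set (Set Y),
    (∀ b ∈ B, IsOpen b) ∧
    -- `B` is a base of the topology of `Y`
    (∀ U : Set Y, IsOpen U → ∀ y ∈ U, ∃ b ∈ B, y ∈ b ∧ b ⊆ U) ∧
    -- `B` is regular
    (∀ U : Set Y, IsOpen U → ∀ y ∈ U, ∃ V ∈ B, ∃ W ∈ B, y ∈ V ∧ V ⊆ Wᶜ ∧ Wᶜ ⊆ U) ∧
    -- `B` is countably additive
    (∀ S ⊆ B, S.Countable → ⋃₀ S ∈ B) ∧
    (∀ b ∈ B, IsGδ (f ⁻¹' b))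

/-- A map `f : X → Y` is *scatteredly continuous* if for every non-empty subset `A ⊆ X`
the restriction `f|A` has a point of continuity. -/
def ScatteredlyContinuous {X Y : Type*} [TopologicalSpace X] [TopologicalSpace Y]
    (f : X → Y) : Prop :=
  ∀ A : Set X, A.Nonempty → ∃ a ∈ A, ContinuousWithinAt f A a

/-- A space `X` is *Preiss-Simon* if for every point `x` and every set `A` with
`x ∈ closure A` there is a sequence of non-empty relatively open subsets of `A`
converging to `x`. -/
def PreissSimonSpace (X : Type*) [TopologicalSpace X] : Prop :=
  ∀ (x : X) (A : Set X), x ∈ closure A →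
    ∃ U : ℕ → Set X,
      (∀ n, (U n).Nonempty ∧ U n ⊆ A ∧ ∃ V : Set X, IsOpen V ∧ U n = A ∩ V) ∧
      (∀ N ∈ nhds x, ∃ k : ℕ, ∀ n ≥ k, U n ⊆ N)

open Filter

section Aux

lemma exists_base_cover {X Y : Type*} [TopologicalSpace Y] {f : X → Y} {𝓑 : Set (Set Y)}
    (hbase : ∀ U : Set Y, IsOpen U → ∀ y ∈ U, ∃ b ∈ 𝓑, y ∈ b ∧ b ⊆ U)
    (hadd : ∀ S ⊆ 𝓑, S.Countable → ⋃₀ S ∈ 𝓑)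
    {P : Set X} (hP : P.Countable) {U : Set Y} (hU : IsOpen U) (hPU : P ⊆ f ⁻¹' U) :
    ∃ b ∈ 𝓑, P ⊆ f ⁻¹' b ∧ b ⊆ U := by
  choose! b hb hyb hbU using hbase U hU
  refine ⟨⋃₀ ((fun x => b (f x)) '' P), hadd _ ?_ (hP.image _), ?_, ?_⟩
  · rintro _ ⟨x, hx, rfl⟩
    exact hb _ (hPU hx)
  · intro x hx
    exact ⟨_, ⟨x, hx, rfl⟩, hyb _ (hPU hx)⟩
  · refine sUnion_subset ?_
    rintro _ ⟨x, hx, rfl⟩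
    exact hbU _ (hPU hx)

variable {X Y : Type*} [TopologicalSpace X] [TopologicalSpace Y]

/-! ### Nowhere continuous restrictions -/

/-- The restriction `f|A` has no point of continuity. -/
def NowhereCont (f : X → Y) (A : Set X) : Prop :=
  ∀ a ∈ A, ¬ ContinuousWithinAt f A a

/-- `f|E` is not scatteredly continuous: `E` contains a nonempty set on which `f` is nowhere
continuous. -/
def NonNull (f : X → Y) (E : Set X) : Prop :=
  ∃ B ⊆ E, B.Nonempty ∧ NowhereCont f B

/-- The largest subset of `A` on which `f` is nowhere continuous. -/
def ncKernel (f : X → Y) (A : Set X) : Set X :=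
  ⋃₀ {B | B ⊆ A ∧ NowhereCont f B}

variable {f : X → Y} {A B : Set X}

lemma ncKernel_subset : ncKernel f A ⊆ A :=
  sUnion_subset fun _ h => h.1

lemma subset_ncKernel (h : B ⊆ A) (hB : NowhereCont f B) : B ⊆ ncKernel f A :=
  subset_sUnion_of_mem (show B ∈ {B | B ⊆ A ∧ NowhereCont f B} from ⟨h, hB⟩)

lemma nowhereCont_ncKernel : NowhereCont f (ncKernel f A) := by
  rintro a ⟨B, hB, ha⟩ hc
  exact hB.2 a ha (hc.mono (subset_ncKernel hB.1 hB.2))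

lemma ncKernel_mono (h : A ⊆ B) : ncKernel f A ⊆ ncKernel f B :=
  subset_ncKernel (ncKernel_subset.trans h) nowhereCont_ncKernel

lemma NonNull.mono (h : A ⊆ B) (hA : NonNull f A) : NonNull f B := by
  obtain ⟨S, hS, h1⟩ := hA
  exact ⟨S, hS.trans h, h1⟩

lemma NowhereCont.inter_open (h : NowhereCont f A) {O : Set X} (hO : IsOpen O) :
    NowhereCont f (A ∩ O) := by
  intro a ha hc
  exact h a ha.1 ((continuousWithinAt_inter (hO.mem_nhds ha.2)).1 hc)

lemma exists_open_of_not_continuousWithinAt {a : X} (h : ¬ ContinuousWithinAt f A a) :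
    ∃ W : Set Y, IsOpen W ∧ f a ∈ W ∧ a ∈ closure (A \ f ⁻¹' W) := by
  by_contra! hcon
  apply h
  intro N hN
  obtain ⟨W, hWN, hWo, haW⟩ := mem_nhds_iff.1 hN
  have h1 : (A \ f ⁻¹' W)ᶜ ∈ 𝓝 a := by
    rw [← mem_interior_iff_mem_nhds, interior_compl]
    exact hcon W hWo haW
  rw [mem_map, mem_nhdsWithin_iff_exists_mem_nhds_inter]
  refine ⟨_, h1, ?_⟩
  rintro z ⟨hz, hzA⟩
  by_contra hzN
  exact hz ⟨hzA, fun hzW => hzN (hWN hzW)⟩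

/-- Preiss-Simon spaces are countably tight, so a countable witness of nowhere continuity exists. -/
lemma exists_countable_nowhereCont (hps : PreissSimonSpace X) (hA : NowhereCont f A)
    (hne : A.Nonempty) :
    ∃ S ⊆ A, S.Countable ∧ S.Nonempty ∧ NowhereCont f S := by
  have key : ∀ a : X, ∃ c : Set X, c ⊆ A ∧ c.Countable ∧
      (a ∈ A → ¬ ContinuousWithinAt f c a) := by
    intro a
    by_cases ha : a ∈ A
    · obtain ⟨W, hWo, haW, hcl⟩ := exists_open_of_not_continuousWithinAt (hA a ha)
      obtain ⟨U, hU, hlim⟩ := hps a _ hcl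
      choose u hu using fun n => (hU n).1
      have huA : ∀ n, u n ∈ A \ f ⁻¹' W := fun n => (hU n).2.1 (hu n)
      refine ⟨range u, ?_, countable_range u, fun _ hc => ?_⟩
      · rintro _ ⟨n, rfl⟩
        exact (huA n).1
      · have ht : Tendsto u atTop (𝓝[range u] a) := by
          refine tendsto_nhdsWithin_iff.2 ⟨?_, Eventually.of_forall fun n => mem_range_self n⟩
          intro N hN
          obtain ⟨k, hk⟩ := hlim N hN
          exact mem_map.2 (mem_atTop_sets.2 ⟨k, fun n hn => hk n hn (hu n)⟩)
        have h2 := (hc.tendsto.comp ht).eventually (hWo.mem_nhds haW)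
        obtain ⟨n, hn⟩ := h2.exists
        exact (huA n).2 hn
    · exact ⟨∅, empty_subset _, countable_empty, fun h => absurd h ha⟩
  choose c hcA hcc hcn using key
  obtain ⟨a0, ha0⟩ := hne
  let S : ℕ → Set X := fun n => Nat.rec {a0} (fun _ T => ⋃ a ∈ T, c a) n
  have hSs : ∀ n, S (n + 1) = ⋃ a ∈ S n, c a := fun n => rfl
  have hSA : ∀ n, S n ⊆ A := by
    intro n
    cases n with
    | zero => exact singleton_subset_iff.2 ha0
    | succ n => rw [hSs]; exact iUnion₂_subset fun a _ => hcA a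
  have hSc : ∀ n, (S n).Countable := by
    intro n
    induction n with
    | zero => exact countable_singleton a0
    | succ n ih => rw [hSs]; exact ih.biUnion fun a _ => hcc a
  refine ⟨⋃ n, S n, iUnion_subset hSA, countable_iUnion hSc,
    ⟨a0, mem_iUnion.2 ⟨0, mem_singleton a0⟩⟩, ?_⟩
  intro a ha hc
  obtain ⟨n, hn⟩ := mem_iUnion.1 ha
  refine hcn a (hSA n hn) (hc.mono ?_)
  refine Subset.trans ?_ (subset_iUnion S (n + 1))
  rw [hSs]
  exact subset_biUnion_of_mem hn

/-- A scatteredly continuous map into a regular space is continuous on some nonempty relatively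
open set. Otherwise the set `D` of discontinuity points of `f|A` is dense in `A`. Near a continuity
point `x` of `f|D`, the values on `D` stay close to `f x`, while some value on `A` does not; it is
taken at a continuity point of `f|A`, which contradicts the density of `D`. -/
lemma exists_open_continuousOn [RegularSpace Y] (hA : ¬ NonNull f A) (hne : A.Nonempty) :
    ∃ O : Set X, IsOpen O ∧ (A ∩ O).Nonempty ∧ ContinuousOn f (A ∩ O) := by
  by_contra! hcon
  let D : Set X := {a ∈ A | ¬ ContinuousWithinAt f A a}
  have hD : ∀ O : Set X, IsOpen O → (A ∩ O).Nonempty → (D ∩ O).Nonempty := by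
    intro O hO hAO
    by_contra hDO
    refine hcon O hO hAO fun a ha => ?_
    by_contra hc
    exact hDO ⟨a, ⟨ha.1, fun h => hc (h.mono inter_subset_left)⟩, ha.2⟩
  have hDne : D.Nonempty := by
    have := hD univ isOpen_univ (by simpa using hne)
    simpa using this
  have hx : ∃ x ∈ D, ContinuousWithinAt f D x := by
    by_contra! h
    exact hA ⟨D, fun a ha => ha.1, hDne, h⟩
  obtain ⟨x, hxD, hxc⟩ := hx
  obtain ⟨W, hWo, hxW, hcl⟩ := exists_open_of_not_continuousWithinAt hxD.2
  obtain ⟨U, hU, hUc, hUW⟩ := exists_mem_nhds_isClosed_subset (hWo.mem_nhds hxW)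
  obtain ⟨G, hGo, hxG, hG⟩ := mem_nhdsWithin.1 (hxc hU)
  obtain ⟨z, hzG, hzA, hzW⟩ := mem_closure_iff.1 hcl G hGo hxG
  have hzc : ContinuousWithinAt f A z := by
    by_contra h
    exact hzW (hUW (hG ⟨hzG, hzA, h⟩))
  have hzU : Uᶜ ∈ 𝓝 (f z) := hUc.isOpen_compl.mem_nhds fun h => hzW (hUW h)
  obtain ⟨G', hGo', hzG', hG'⟩ := mem_nhdsWithin.1 (hzc hzU)
  obtain ⟨d, hdD, hd, hd'⟩ := hD (G ∩ G') (hGo.inter hGo') ⟨z, hzA, hzG, hzG'⟩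
  exact hG' ⟨hd', hdD.1⟩ (hG ⟨hd, hdD⟩)

/-- If `f` is nowhere continuous on `A₁ ∪ A₂` but continuous on `A₁ ∩ O`, the discontinuity at
points of `A₁ ∩ O` comes from `A₂ ∩ O`. -/
lemma not_continuousWithinAt_of_union {A₁ A₂ O : Set X} (hA : NowhereCont f (A₁ ∪ A₂))
    (hO : IsOpen O) (hc : ContinuousOn f (A₁ ∩ O)) {x : X} (hx : x ∈ A₁ ∩ O) :
    ¬ ContinuousWithinAt f (A₂ ∩ O) x := by
  intro h
  have h2 := (hc x hx).union h
  rw [← union_inter_distrib_right] at h2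
  exact hA.inter_open hO x ⟨Or.inl hx.1, hx.2⟩ h2

lemma subset_closure_of_union {A₁ A₂ O : Set X} (hA : NowhereCont f (A₁ ∪ A₂))
    (hO : IsOpen O) (hc : ContinuousOn f (A₁ ∩ O)) : A₁ ∩ O ⊆ closure (A₂ ∩ O) := by
  intro x hx
  by_contra h
  exact not_continuousWithinAt_of_union hA hO hc hx (continuousWithinAt_of_notMem_closure h)

/-! ### Consequences of Baire category -/

/-- Two `Gδ`-sets containing mutually dense nonempty sets intersect. -/
lemma gdelta_inter_nonempty (hhb : ∀ C : Set X, IsClosed C → BaireSpace C)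
    {P Q G H : Set X} (hP : P.Nonempty) (hPQ : P ⊆ closure Q) (hQP : Q ⊆ closure P)
    (hPG : P ⊆ G) (hQH : Q ⊆ H) (hG : IsGδ G) (hH : IsGδ H) : (G ∩ H).Nonempty := by
  let C : Set X := closure P
  have : BaireSpace C := hhb C isClosed_closure
  have : Nonempty C := hP.closure.to_subtype
  have dense : ∀ T K : Set X, T ⊆ C → C ⊆ closure T → T ⊆ K →
      Dense ((Subtype.val : C → X) ⁻¹' K) := by
    intro T K hTC hCT hTK
    rw [Subtype.dense_iff]
    intro x hx
    refine closure_mono ?_ (hCT hx)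
    intro t ht
    exact ⟨⟨t, hTC ht⟩, hTK ht, rfl⟩
  have d1 := dense P G subset_closure Subset.rfl hPG
  have d2 := dense Q H hQP (closure_minimal hPQ isClosed_closure) hQH
  have d := d1.inter_of_Gδ (hG.preimage continuous_subtype_val)
    (hH.preimage continuous_subtype_val) d2
  obtain ⟨x, hx⟩ := d.nonempty
  exact ⟨x, hx⟩

/-- Countable sets dense in each other cannot be mapped into disjoint open sets: basic sets inside
those open sets would have disjoint `Gδ`-preimages. -/
lemma not_separated (hhb : ∀ C : Set X, IsClosed C → BaireSpace C)
    {𝓑 : Set (Set Y)}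
    (hbase : ∀ U : Set Y, IsOpen U → ∀ y ∈ U, ∃ b ∈ 𝓑, y ∈ b ∧ b ⊆ U)
    (hadd : ∀ S ⊆ 𝓑, S.Countable → ⋃₀ S ∈ 𝓑)
    (hGd : ∀ b ∈ 𝓑, IsGδ (f ⁻¹' b))
    {P Q : Set X} (hPc : P.Countable) (hQc : Q.Countable) (hP : P.Nonempty)
    (hPQ : P ⊆ closure Q) (hQP : Q ⊆ closure P) {U V : Set Y} (hU : IsOpen U) (hV : IsOpen V)
    (hUV : Disjoint U V) (hPU : P ⊆ f ⁻¹' U) (hQV : Q ⊆ f ⁻¹' V) : False := by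
  obtain ⟨b, hb, hPb, hbU⟩ := exists_base_cover hbase hadd hPc hU hPU
  obtain ⟨c, hc, hQc', hcV⟩ := exists_base_cover hbase hadd hQc hV hQV
  obtain ⟨x, hx1, hx2⟩ :=
    gdelta_inter_nonempty hhb hP hPQ hQP hPb hQc' (hGd b hb) (hGd c hc)
  exact hUV.le_bot ⟨hbU hx1, hcV hx2⟩

/-- A countable set whose points `x k` carry neighbourhoods `W k` of their values cannot be spread
so widely that removing any single `f ⁻¹' closure (W j)` leaves a dense subset. -/
lemma no_spread_sequence (hhb : ∀ C : Set X, IsClosed C → BaireSpace C)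
    {𝓑 : Set (Set Y)}
    (hbase : ∀ U : Set Y, IsOpen U → ∀ y ∈ U, ∃ b ∈ 𝓑, y ∈ b ∧ b ⊆ U)
    (hadd : ∀ S ⊆ 𝓑, S.Countable → ⋃₀ S ∈ 𝓑)
    (hGd : ∀ b ∈ 𝓑, IsGδ (f ⁻¹' b))
    (x : ℕ → X) (W : ℕ → Set Y) (hW : ∀ k, IsOpen (W k)) (hxW : ∀ k, f (x k) ∈ W k)
    (hspread : ∀ i j, x i ∈ closure (range x \ f ⁻¹' closure (W j))) : False := by
  choose b hb hxb hbW using fun k => hbase (W k) (hW k) (f (x k)) (hxW k)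
  let S : Set X := range x
  let C : Set X := closure S
  have : BaireSpace C := hhb C isClosed_closure
  have hCne : Nonempty C := ⟨⟨x 0, subset_closure (mem_range_self 0)⟩⟩
  let G : Set C := Subtype.val ⁻¹' (f ⁻¹' ⋃₀ range b)
  have hG : IsGδ G :=
    (hGd _ (hadd _ (by rintro _ ⟨k, rfl⟩; exact hb k) (countable_range b))).preimage
      continuous_subtype_val
  have hGdense : Dense G := by
    rw [Subtype.dense_iff]
    refine closure_mono ?_
    rintro _ ⟨k, rfl⟩
    exact ⟨⟨x k, subset_closure (mem_range_self k)⟩, ⟨b k, mem_range_self k, hxb k⟩, rfl⟩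
  have hdense := hG.dense_iUnion_interior_of_closed hGdense
    (f := fun k => closure ((Subtype.val : C → X) ⁻¹' (f ⁻¹' b k)))
    (fun k => isClosed_closure) (by
      rintro z ⟨_, ⟨k, rfl⟩, hz⟩
      exact mem_iUnion.2 ⟨k, subset_closure hz⟩)
  obtain ⟨z, hz⟩ := hdense.nonempty
  obtain ⟨j, hj⟩ := mem_iUnion.1 hz
  obtain ⟨O, hO, hOeq⟩ := isOpen_induced_iff.1
    (isOpen_interior : IsOpen (interior (closure ((Subtype.val : C → X) ⁻¹' (f ⁻¹' b j)))))
  -- `Q` is the relatively open piece of `closure S` in which the `j`-th preimage is dense.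
  let Q : Set X := f ⁻¹' b j ∩ C ∩ O
  let P : Set X := (S \ f ⁻¹' closure (W j)) ∩ O
  have hOC : O ∩ C ⊆ closure Q := by
    rintro w ⟨hwO, hwC⟩
    have hw : (⟨w, hwC⟩ : C) ∈ closure ((Subtype.val : C → X) ⁻¹' (f ⁻¹' b j)) := by
      apply interior_subset
      rw [← hOeq]
      exact hwO
    rw [closure_subtype] at hw
    refine closure_mono ?_ (hO.inter_closure ⟨hwO, hw⟩)
    rintro v ⟨hvO, ⟨v', hv', rfl⟩⟩
    exact ⟨⟨hv', v'.2⟩, hvO⟩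
  have hPS : S ∩ O ⊆ closure P := by
    rintro _ ⟨⟨i, rfl⟩, hiO⟩
    have := hO.inter_closure ⟨hiO, hspread i j⟩
    rwa [inter_comm] at this
  have hQP : Q ⊆ closure P := by
    rintro w ⟨⟨_, hwC⟩, hwO⟩
    have h1 : w ∈ closure (O ∩ S) := hO.inter_closure ⟨hwO, hwC⟩
    rw [inter_comm] at h1
    exact closure_minimal hPS isClosed_closure h1
  have hPQ : P ⊆ closure Q := fun w hw => hOC ⟨hw.2, subset_closure hw.1.1⟩
  have hPne : P.Nonempty := by
    have hzO : z.1 ∈ O := by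
      have : z ∈ (Subtype.val : C → X) ⁻¹' O := by rw [hOeq]; exact hj
      exact this
    exact closure_nonempty_iff.1 ((closure_nonempty_iff.1 ⟨_, hOC ⟨hzO, z.2⟩⟩).mono hQP)
  have hPc : P.Countable := (countable_range x).mono fun w hw => hw.1.1
  obtain ⟨v, hv, hPv, hvU⟩ := exists_base_cover (f := f) hbase hadd hPc
    (isClosed_closure : IsClosed (closure (W j))).isOpen_compl (fun w hw => hw.1.2)
  obtain ⟨w, hw1, hw2⟩ := gdelta_inter_nonempty hhb hPne hPQ hQP hPv
    (fun w hw => hw.1.1 : Q ⊆ f ⁻¹' b j) (hGd v hv) (hGd _ (hb j))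
  exact hvU hw1 (subset_closure (hbW j hw2))

/-! ### Sets of scattered continuity form an ideal among countable sets -/

/-- Among countable sets, the union of two sets on which `f` is scatteredly continuous has the same
property: otherwise, on a suitable open set, two mutually dense pieces have separated images. -/
lemma NonNull.union [RegularSpace Y] (hhb : ∀ C : Set X, IsClosed C → BaireSpace C)
    {𝓑 : Set (Set Y)}
    (hbase : ∀ U : Set Y, IsOpen U → ∀ y ∈ U, ∃ b ∈ 𝓑, y ∈ b ∧ b ⊆ U)
    (hadd : ∀ S ⊆ 𝓑, S.Countable → ⋃₀ S ∈ 𝓑)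
    (hGd : ∀ b ∈ 𝓑, IsGδ (f ⁻¹' b))
    {E E₁ E₂ : Set X} (hEc : E.Countable) (hE : NonNull f E) (hsub : E ⊆ E₁ ∪ E₂) :
    NonNull f E₁ ∨ NonNull f E₂ := by
  by_contra! hcon
  obtain ⟨A, hAE, hAne, hA⟩ := hE
  let A₁ := A ∩ E₁
  let A₂ := A ∩ E₂
  have hAeq : A = A₁ ∪ A₂ := by
    rw [← inter_union_distrib_left, inter_eq_left.2 (hAE.trans hsub)]
  have h1 : ¬ NonNull f A₁ := fun h => hcon.1 (h.mono inter_subset_right)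
  have h2 : ¬ NonNull f A₂ := fun h => hcon.2 (h.mono inter_subset_right)
  have hA' : NowhereCont f (A₁ ∪ A₂) := hAeq ▸ hA
  have hA'' : NowhereCont f (A₂ ∪ A₁) := union_comm A₁ A₂ ▸ hA'
  have hne1 : A₁.Nonempty := by
    by_contra h
    rw [not_nonempty_iff_eq_empty] at h
    rw [h, empty_union] at hAeq
    exact h2 ⟨A, hAeq.subset, hAne, hA⟩
  obtain ⟨O₁, hO₁, hne, hc₁⟩ := exists_open_continuousOn h1 hne1
  have hne2 : (A₂ ∩ O₁).Nonempty :=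
    closure_nonempty_iff.1 (hne.mono (subset_closure_of_union hA' hO₁ hc₁))
  obtain ⟨O₂, hO₂, hne', hc₂⟩ :=
    exists_open_continuousOn (fun h => h2 (h.mono inter_subset_left)) hne2
  let O := O₁ ∩ O₂
  have hO : IsOpen O := hO₁.inter hO₂
  rw [inter_assoc] at hne' hc₂
  have hc₁' : ContinuousOn f (A₁ ∩ O) :=
    hc₁.mono (inter_subset_inter_right _ inter_subset_left)
  have hd1 : A₁ ∩ O ⊆ closure (A₂ ∩ O) := subset_closure_of_union hA' hO hc₁'
  have hd2 : A₂ ∩ O ⊆ closure (A₁ ∩ O) := subset_closure_of_union hA'' hO hc₂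
  obtain ⟨x, hx⟩ : (A₁ ∩ O).Nonempty := closure_nonempty_iff.1 (hne'.mono hd2)
  obtain ⟨W, hWo, hxW, hcl⟩ := exists_open_of_not_continuousWithinAt
    (not_continuousWithinAt_of_union hA' hO hc₁' hx)
  obtain ⟨U, hU, hUc, hUW⟩ := exists_mem_nhds_isClosed_subset (hWo.mem_nhds hxW)
  obtain ⟨G, hGo, hxG, hG⟩ := mem_nhdsWithin.1 (hc₁' x hx (interior_mem_nhds.2 hU))
  obtain ⟨z, hzG, hzA, hzW⟩ := mem_closure_iff.1 hcl G hGo hxG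
  have hzU : Uᶜ ∈ 𝓝 (f z) := hUc.isOpen_compl.mem_nhds fun h => hzW (hUW h)
  obtain ⟨G', hGo', hzG', hG'⟩ := mem_nhdsWithin.1 (hc₂ z hzA hzU)
  have hloc : ∀ S T : Set X, S ⊆ closure T → S ∩ (G ∩ G') ⊆ closure (T ∩ (G ∩ G')) := by
    intro S T hST w hw
    have := (hGo.inter hGo').inter_closure ⟨hw.2, hST hw.1⟩
    rwa [inter_comm] at this
  have hAc : A.Countable := hEc.mono hAE
  refine not_separated hhb hbase hadd hGd (P := A₂ ∩ O ∩ (G ∩ G')) (Q := A₁ ∩ O ∩ (G ∩ G'))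
    (hAc.mono fun w hw => hw.1.1.1) (hAc.mono fun w hw => hw.1.1.1)
    ⟨z, hzA, hzG, hzG'⟩ (hloc _ _ hd2) (hloc _ _ hd1)
    hUc.isOpen_compl isOpen_interior
    (disjoint_compl_left.mono_right interior_subset) ?_ ?_
  · exact fun w hw => hG' ⟨hw.2.2, hw.1⟩
  · exact fun w hw => hG ⟨hw.2.1, hw.1⟩

/-- Finitely many fibres can be discarded, because `f` is constant on each of them. -/
lemma NonNull.diff_finite [RegularSpace Y] (hhb : ∀ C : Set X, IsClosed C → BaireSpace C)
    {𝓑 : Set (Set Y)}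
    (hbase : ∀ U : Set Y, IsOpen U → ∀ y ∈ U, ∃ b ∈ 𝓑, y ∈ b ∧ b ⊆ U)
    (hadd : ∀ S ⊆ 𝓑, S.Countable → ⋃₀ S ∈ 𝓑)
    (hGd : ∀ b ∈ 𝓑, IsGδ (f ⁻¹' b))
    {E : Set X} (hEc : E.Countable) (hE : NonNull f E) {F : Set Y} (hF : F.Finite) :
    NonNull f (E \ f ⁻¹' F) := by
  induction F, hF using Set.Finite.induction_on with
  | empty => simpa using hE
  | @insert y F _ _ ih =>
    have hsub : E \ f ⁻¹' F ⊆ (E \ f ⁻¹' insert y F) ∪ f ⁻¹' {y} := by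
      rintro x ⟨hx, hxF⟩
      by_cases hxy : f x = y
      · exact Or.inr hxy
      · exact Or.inl ⟨hx, fun h => h.elim hxy hxF⟩
    rcases NonNull.union hhb hbase hadd hGd (hEc.mono sdiff_subset) ih hsub with h | h
    · exact h
    · obtain ⟨B, hB, ⟨a, ha⟩, hn⟩ := h
      exact absurd ((continuousWithinAt_const (b := y)).congr (fun w hw => hB hw) (hB ha)) (hn a ha)

/-! ### The inductive construction -/

/-- A countable nowhere continuous set has a point `x` such that away from some neighbourhood of
`f x` there are still nowhere continuous sets arbitrarily close to `x`. -/
lemma exists_splitting_point [RegularSpace Y] (hhb : ∀ C : Set X, IsClosed C → BaireSpace C)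
    {𝓑 : Set (Set Y)}
    (hbase : ∀ U : Set Y, IsOpen U → ∀ y ∈ U, ∃ b ∈ 𝓑, y ∈ b ∧ b ⊆ U)
    (hadd : ∀ S ⊆ 𝓑, S.Countable → ⋃₀ S ∈ 𝓑)
    (hGd : ∀ b ∈ 𝓑, IsGδ (f ⁻¹' b))
    (hAc : A.Countable) (hne : A.Nonempty) (hA : NowhereCont f A) :
    ∃ x ∈ A, ∃ W : Set Y, IsOpen W ∧ f x ∈ W ∧
      x ∈ closure (ncKernel f (A \ f ⁻¹' closure W)) := by
  by_contra! hcon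
  obtain ⟨x, hx⟩ := hne
  obtain ⟨W₀, hWo₀, hxW₀, hcl⟩ := exists_open_of_not_continuousWithinAt (hA x hx)
  obtain ⟨U, hU, hUc, hUW⟩ := exists_mem_nhds_isClosed_subset (hWo₀.mem_nhds hxW₀)
  have hclU : closure (interior U) ⊆ U := closure_minimal interior_subset hUc
  have h1 := hcon x hx (interior U) isOpen_interior (mem_interior_iff_mem_nhds.2 hU)
  obtain ⟨z, hzO, hzA, hzW⟩ := mem_closure_iff.1 hcl _ isClosed_closure.isOpen_compl h1
  obtain ⟨U', hU', hUc', hUW'⟩ := exists_mem_nhds_isClosed_subset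
    (hUc.isOpen_compl.mem_nhds fun h => hzW (hUW h) : Uᶜ ∈ 𝓝 (f z))
  have hclU' : closure (interior U') ⊆ U' := closure_minimal interior_subset hUc'
  have h2 := hcon z hzA (interior U') isOpen_interior (mem_interior_iff_mem_nhds.2 hU')
  set K₁ := ncKernel f (A \ f ⁻¹' closure (interior U))
  set K₂ := ncKernel f (A \ f ⁻¹' closure (interior U'))
  let O := (closure K₁)ᶜ ∩ (closure K₂)ᶜ
  have hO : IsOpen O := isClosed_closure.isOpen_compl.inter isClosed_closure.isOpen_compl
  have hnn : NonNull f (A ∩ O) := ⟨A ∩ O, Subset.rfl, ⟨z, hzA, hzO, h2⟩, hA.inter_open hO⟩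
  have hsub : A ∩ O ⊆ ((A \ f ⁻¹' closure (interior U)) ∩ O) ∪
      ((A \ f ⁻¹' closure (interior U')) ∩ O) := by
    rintro w ⟨hwA, hwO⟩
    by_cases hw : f w ∈ closure (interior U)
    · exact Or.inr ⟨⟨hwA, fun h => hUW' (hclU' h) (hclU hw)⟩, hwO⟩
    · exact Or.inl ⟨⟨hwA, hw⟩, hwO⟩
  rcases NonNull.union hhb hbase hadd hGd (hAc.mono inter_subset_left) hnn hsub with h | h
  · obtain ⟨B, hB, ⟨w, hw⟩, hn⟩ := h
    exact (hB hw).2.1 (subset_closure (subset_ncKernel (fun v hv => (hB hv).1) hn hw))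
  · obtain ⟨B, hB, ⟨w, hw⟩, hn⟩ := h
    exact (hB hw).2.2 (subset_closure (subset_ncKernel (fun v hv => (hB hv).1) hn hw))

/-- A sequence of open sets meeting `A` infinitely often keeps meeting the nowhere continuous part
of `A \ f ⁻¹' closure W` infinitely often, for small neighbourhoods `W` of any `y` but at most one. -/
lemma bad_subsingleton [RegularSpace Y] [T2Space Y]
    (hhb : ∀ C : Set X, IsClosed C → BaireSpace C)
    {𝓑 : Set (Set Y)}
    (hbase : ∀ U : Set Y, IsOpen U → ∀ y ∈ U, ∃ b ∈ 𝓑, y ∈ b ∧ b ⊆ U)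
    (hadd : ∀ S ⊆ 𝓑, S.Countable → ⋃₀ S ∈ 𝓑)
    (hGd : ∀ b ∈ 𝓑, IsGδ (f ⁻¹' b))
    (hAc : A.Countable) (hA : NowhereCont f A) (V : ℕ → Set X) (hV : ∀ m, IsOpen (V m))
    (hfr : ∃ᶠ m in atTop, (A ∩ V m).Nonempty) :
    {y : Y | ∀ W : Set Y, IsOpen W → y ∈ W →
      ¬ ∃ᶠ m in atTop, (ncKernel f (A \ f ⁻¹' closure W) ∩ V m).Nonempty}.Subsingleton := by
  intro y hy y' hy'
  by_contra hne
  obtain ⟨W, hyW, hW, W', hyW', hW', hdis⟩ := exists_open_nhds_disjoint_closure hne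
  have e1 := not_frequently.1 (hy W hW hyW)
  have e2 := not_frequently.1 (hy' W' hW' hyW')
  obtain ⟨m, hm, h1, h2⟩ := (hfr.and_eventually (e1.and e2)).exists
  have hnn : NonNull f (A ∩ V m) := ⟨A ∩ V m, Subset.rfl, hm, hA.inter_open (hV m)⟩
  have hsub : A ∩ V m ⊆ ((A \ f ⁻¹' closure W) ∩ V m) ∪ ((A \ f ⁻¹' closure W') ∩ V m) := by
    rintro w ⟨hwA, hwO⟩
    by_cases hw : f w ∈ closure W
    · exact Or.inr ⟨⟨hwA, fun h => hdis.le_bot ⟨hw, h⟩⟩, hwO⟩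
    · exact Or.inl ⟨⟨hwA, hw⟩, hwO⟩
  rcases NonNull.union hhb hbase hadd hGd (hAc.mono inter_subset_left) hnn hsub with h | h
  · obtain ⟨B, hB, ⟨w, hw⟩, hn⟩ := h
    exact h1 ⟨w, subset_ncKernel (fun v hv => (hB hv).1) hn hw, (hB hw).2⟩
  · obtain ⟨B, hB, ⟨w, hw⟩, hn⟩ := h
    exact h2 ⟨w, subset_ncKernel (fun v hv => (hB hv).1) hn hw, (hB hw).2⟩

/-- One step of the construction: choose a point `x` of `A ∩ O`, a neighbourhood `W` of its value,
and a smaller nowhere continuous set `A'` outside `f ⁻¹' closure W` that accumulates at `x` along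
`V'` and is still met infinitely often by the finitely many earlier sequences `V i`. -/
lemma exists_step [RegularSpace Y] [T2Space Y]
    (hhb : ∀ C : Set X, IsClosed C → BaireSpace C) (hps : PreissSimonSpace X)
    {𝓑 : Set (Set Y)}
    (hbase : ∀ U : Set Y, IsOpen U → ∀ y ∈ U, ∃ b ∈ 𝓑, y ∈ b ∧ b ⊆ U)
    (hadd : ∀ S ⊆ 𝓑, S.Countable → ⋃₀ S ∈ 𝓑)
    (hGd : ∀ b ∈ 𝓑, IsGδ (f ⁻¹' b))
    (hAc : A.Countable) (hA : NowhereCont f A) (k : ℕ) (V : ℕ → ℕ → Set X)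
    (hV : ∀ i < k, ∀ m, IsOpen (V i m))
    (hfr : ∀ i < k, ∃ᶠ m in atTop, (A ∩ V i m).Nonempty)
    {O : Set X} (hO : IsOpen O) (hAO : (A ∩ O).Nonempty) :
    ∃ x ∈ A ∩ O, ∃ W : Set Y, IsOpen W ∧ f x ∈ W ∧ ∃ A' ⊆ A \ f ⁻¹' closure W,
      NowhereCont f A' ∧ A'.Nonempty ∧ ∃ V' : ℕ → Set X, (∀ m, IsOpen (V' m)) ∧
        (∀ m, (A' ∩ V' m).Nonempty) ∧ (∀ N ∈ 𝓝 x, ∃ m₀, ∀ m ≥ m₀, A' ∩ V' m ⊆ N) ∧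
        ∀ i < k, ∃ᶠ m in atTop, (A' ∩ V i m).Nonempty := by
  let Bad : ℕ → Set Y := fun i => {y : Y | ∀ W : Set Y, IsOpen W → y ∈ W →
      ¬ ∃ᶠ m in atTop, (ncKernel f (A \ f ⁻¹' closure W) ∩ V i m).Nonempty}
  have hFfin : (⋃ i ∈ Iio k, Bad i).Finite :=
    (finite_Iio k).biUnion fun i hi =>
      (bad_subsingleton hhb hbase hadd hGd hAc hA (V i) (hV i hi) (hfr i hi)).finite
  obtain ⟨B, hB, hBne, hBn⟩ := NonNull.diff_finite hhb hbase hadd hGd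
    (hAc.mono inter_subset_left) ⟨A ∩ O, Subset.rfl, hAO, hA.inter_open hO⟩ hFfin
  have hBA : B ⊆ A := fun w hw => (hB hw).1.1
  obtain ⟨x, hx, W₀, hW₀, hxW₀, hxcl⟩ :=
    exists_splitting_point hhb hbase hadd hGd (hAc.mono hBA) hBne hBn
  have hgood : ∀ i, ∃ W : Set Y, IsOpen W ∧ f x ∈ W ∧ (i < k →
      ∃ᶠ m in atTop, (ncKernel f (A \ f ⁻¹' closure W) ∩ V i m).Nonempty) := by
    intro i
    by_cases hi : i < k
    · have hnb : f x ∉ Bad i := fun h => (hB hx).2 (mem_biUnion (show i ∈ Iio k from hi) h)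
      simp only [Bad, mem_ofPred_eq] at hnb
      push Not at hnb
      obtain ⟨W, h1, h2, h3⟩ := hnb
      exact ⟨W, h1, h2, fun _ => h3⟩
    · exact ⟨univ, isOpen_univ, mem_univ _, fun h => absurd h hi⟩
  choose W hW hxW hWfr using hgood
  let W' : Set Y := W₀ ∩ ⋂ i ∈ Iio k, W i
  have hW'o : IsOpen W' := hW₀.inter ((finite_Iio k).isOpen_biInter fun i _ => hW i)
  have hxW' : f x ∈ W' := ⟨hxW₀, mem_iInter₂.2 fun i _ => hxW i⟩
  have hanti : ∀ T : Set Y, W' ⊆ T → ∀ D ⊆ A,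
      ncKernel f (D \ f ⁻¹' closure T) ⊆ ncKernel f (A \ f ⁻¹' closure W') :=
    fun T hT D hD => ncKernel_mono
      (sdiff_subset_sdiff hD (preimage_mono (closure_mono hT)))
  have hxcl' : x ∈ closure (ncKernel f (A \ f ⁻¹' closure W')) :=
    closure_mono (hanti W₀ inter_subset_left B hBA) hxcl
  obtain ⟨U, hU, hlim⟩ := hps x _ hxcl'
  choose V' hV' hUV' using fun n => (hU n).2.2
  refine ⟨x, (hB hx).1, W', hW'o, hxW', _, ncKernel_subset, nowhereCont_ncKernel,
    closure_nonempty_iff.1 ⟨x, hxcl'⟩, V', hV', fun m => hUV' m ▸ (hU m).1, ?_, ?_⟩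
  · intro N hN
    obtain ⟨m₀, h⟩ := hlim N hN
    exact ⟨m₀, fun m hm => hUV' m ▸ h m hm⟩
  · intro i hi
    refine (hWfr i hi).mono fun m hm => hm.mono (inter_subset_inter_left _ ?_)
    exact hanti (W i) (inter_subset_right.trans (biInter_subset_of_mem (show i ∈ Iio k from hi)))
      A Subset.rfl

/-- A countable nowhere continuous set yields the configuration excluded by `no_spread_sequence`. The
stage `k` adds a point near the earlier point with index `(Nat.unpair k).1`, so that every index
recurs infinitely often. -/
lemma exists_spread_sequence [RegularSpace Y] [T2Space Y]
    (hhb : ∀ C : Set X, IsClosed C → BaireSpace C) (hps : PreissSimonSpace X)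
    {𝓑 : Set (Set Y)}
    (hbase : ∀ U : Set Y, IsOpen U → ∀ y ∈ U, ∃ b ∈ 𝓑, y ∈ b ∧ b ⊆ U)
    (hadd : ∀ S ⊆ 𝓑, S.Countable → ⋃₀ S ∈ 𝓑)
    (hGd : ∀ b ∈ 𝓑, IsGδ (f ⁻¹' b))
    (hAc : A.Countable) (hne : A.Nonempty) (hA : NowhereCont f A) :
    ∃ (x : ℕ → X) (W : ℕ → Set Y), (∀ k, IsOpen (W k)) ∧ (∀ k, f (x k) ∈ W k) ∧
      ∀ i j, x i ∈ closure (range x \ f ⁻¹' closure (W j)) := by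
  -- A state at stage `k` is the current nowhere continuous set with the sequences `V i`, `i < k`.
  let Inv : ℕ → Set X × (ℕ → ℕ → Set X) → Prop := fun k σ =>
    σ.1.Countable ∧ σ.1.Nonempty ∧ NowhereCont f σ.1 ∧
      (∀ i < k, ∀ m, IsOpen (σ.2 i m)) ∧ ∀ i < k, ∃ᶠ m in atTop, (σ.1 ∩ σ.2 i m).Nonempty
  have step : ∀ (k : ℕ) (σ : {σ // Inv k σ}), ∃ (x : X) (W : Set Y) (τ : {τ // Inv (k + 1) τ}),
      x ∈ σ.1.1 ∧ IsOpen W ∧ f x ∈ W ∧ τ.1.1 ⊆ σ.1.1 \ f ⁻¹' closure W ∧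
      (∀ N ∈ 𝓝 x, ∃ m₀, ∀ m ≥ m₀, τ.1.1 ∩ τ.1.2 k m ⊆ N) ∧
      (∀ i < k, τ.1.2 i = σ.1.2 i) ∧
      ((Nat.unpair k).1 < k → ∃ m ≥ k, x ∈ σ.1.2 (Nat.unpair k).1 m) := by
    rintro k ⟨⟨D, V⟩, hDc, hDne, hD, hV, hfr⟩
    have hO : ∃ O : Set X, IsOpen O ∧ (D ∩ O).Nonempty ∧
        ((Nat.unpair k).1 < k → ∃ m ≥ k, O = V (Nat.unpair k).1 m) := by
      by_cases hp : (Nat.unpair k).1 < k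
      · obtain ⟨m, hm, hmne⟩ := frequently_atTop.1 (hfr _ hp) k
        exact ⟨V _ m, hV _ hp m, hmne, fun _ => ⟨m, hm, rfl⟩⟩
      · exact ⟨univ, isOpen_univ, by simpa using hDne, fun h => absurd h hp⟩
    obtain ⟨O, hO, hDO, hOV⟩ := hO
    obtain ⟨x, hx, W, hW, hxW, D', hD'sub, hD', hD'ne, V', hV', hV'ne, hlim, hfr'⟩ :=
      exists_step hhb hps hbase hadd hGd hDc hD k V hV hfr hO hDO
    refine ⟨x, W, ⟨(D', Function.update V k V'), hDc.mono (hD'sub.trans sdiff_subset), hD'ne, hD',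
      ?_, ?_⟩, hx.1, hW, hxW, hD'sub, ?_, ?_, ?_⟩
    · intro i hi m
      rcases Nat.lt_succ_iff_lt_or_eq.1 hi with h | rfl
      · simpa [Function.update_of_ne h.ne] using hV i h m
      · simpa using hV' m
    · intro i hi
      rcases Nat.lt_succ_iff_lt_or_eq.1 hi with h | rfl
      · simpa [Function.update_of_ne h.ne] using hfr' i h
      · simpa using (Eventually.of_forall hV'ne).frequently
    · simpa using hlim
    · intro i hi
      simp [Function.update_of_ne hi.ne]
    · intro hp
      obtain ⟨m, hm, rfl⟩ := hOV hp
      exact ⟨m, hm, hx.2⟩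
  choose px pW pτ h1 h2 h3 h4 h5 h6 h7 using step
  have hinit : Inv 0 (A, fun _ _ => univ) :=
    ⟨hAc, hne, hA, fun i hi => absurd hi (Nat.not_lt_zero i),
      fun i hi => absurd hi (Nat.not_lt_zero i)⟩
  let s : ∀ k, {σ // Inv k σ} := fun k => Nat.rec ⟨_, hinit⟩ (fun k σ => pτ k σ) k
  have hs : ∀ k, s (k + 1) = pτ k (s k) := fun k => rfl
  have hanti : Antitone fun k => (s k).1.1 := by
    refine antitone_nat_of_succ_le fun k => ?_
    rw [hs]
    exact (h4 k (s k)).trans sdiff_subset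
  have hcoh : ∀ i k, i + 1 ≤ k → (s k).1.2 i = (s (i + 1)).1.2 i := by
    intro i k hk
    induction k, hk using Nat.le_induction with
    | base => rfl
    | succ k hk ih => rw [hs k, h6 k (s k) i hk, ih]
  refine ⟨fun k => px k (s k), fun k => pW k (s k), fun k => h2 k _, fun k => h3 k _, ?_⟩
  intro i j
  rw [mem_closure_iff_nhds]
  intro N hN
  obtain ⟨m₀, hm₀⟩ := h5 i (s i) N hN
  -- A stage after `i`, `j` and `m₀` at which the new point is taken near `x i`.
  let k := Nat.pair i (i + j + m₀ + 1)
  have hk : i + j + m₀ + 1 ≤ k := Nat.right_le_pair _ _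
  have hki : (Nat.unpair k).1 = i := by simp [k]
  obtain ⟨m, hm, hxm⟩ := h7 k (s k) (by omega)
  rw [hki, hcoh i k (by omega)] at hxm
  have hmem : ∀ l, l + 1 ≤ k → px k (s k) ∈ (s (l + 1)).1.1 :=
    fun l hl => hanti hl (h1 k (s k))
  refine ⟨px k (s k), hm₀ m (by omega) ⟨hmem i (by omega), hxm⟩, mem_range_self k, ?_⟩
  exact (h4 j (s j) (hmem j (by omega))).2

end Aux

theorem scatteredlyContinuous_of_weaklyGdeltaMeasurable
    {X Y : Type*} [TopologicalSpace X] [TopologicalSpace Y]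
    [RegularSpace Y] [T2Space Y]
    (hhb : ∀ C : Set X, IsClosed C → BaireSpace C)
    (hps : PreissSimonSpace X)
    (f : X → Y) (hf : WeaklyGdeltaMeasurable f) :
    ScatteredlyContinuous f := by
  obtain ⟨𝓑, -, hbase, -, hadd, hGd⟩ := hf
  intro A hne
  by_contra! hA
  obtain ⟨S, -, hSc, hSne, hS⟩ := exists_countable_nowhereCont hps hA hne
  obtain ⟨x, W, hW, hxW, hspread⟩ :=
    exists_spread_sequence hhb hps hbase hadd hGd hSc hSne hS
  exact no_spread_sequence hhb hbase hadd hGd x W hW hxW hspread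
end

section
/- Let X be a perfectly paracompact hereditarily Baire Preiss-Simon topological space and Y a regular Hausdorff space. Then every Gδ-measurable map f : X → Y is Fσ-measurable. -/
/-!
Write `A = f ⁻¹' U` for an open set `U`.

*Resolvability.* Every non-empty closed `Z` has a non-empty relatively open piece contained in `A`
or disjoint from `A` (`exists_open_piece`). Otherwise `A` and its complement are both dense in some
`Z`. Then `A ∩ Z` is residual in `Z`, and so is `Z \ f ⁻¹' closure V` for every open `V` with
`closure V ⊆ U`, as it is a `Gδ`-set containing `Z \ A`. Hence one can choose inductively points
`x n ∈ A ∩ Z` in prescribed non-empty relatively open subsets of `Z`, and open `V n ∋ f (x n)`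
that are pairwise disjoint: `x n` only has to avoid the sets `f ⁻¹' closure (V m)`, `m < n`. The
Preiss-Simon property supplies, for each point already chosen, a sequence of relatively open sets
converging to it; letting the later points run through these sets splits `x 1, x 2, …` into two
classes, both dense in `C = closure (range x)`. The unions of the `V n` over the two classes have
disjoint preimages, which are dense `Gδ`-sets in the Baire space `C`: a contradiction.

*Gluing.* In a perfectly paracompact space, a set that is locally `Fσ` at the points of an open set
`G` has `Fσ` intersection with `G` (`isFsigma_inter_sUnion`): exhaust `G` by closed sets and use
locally finite open refinements. Taking for `G` the union of all open `O` with `A ∩ O` of type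
`Fσ`, a relatively open piece of the complement of `G` as above would enlarge `G`; so `G` is the
whole space. No separation axiom on `X` is needed.
-/

open Set Topology

/-- A map `f : X → Y` is *Gδ-measurable* if the preimage of every open set is a
`Gδ`-set. -/
def GdeltaMeasurable {X Y : Type*} [TopologicalSpace X] [TopologicalSpace Y]
    (f : X → Y) : Prop :=
  ∀ U : Set Y, IsOpen U → IsGδ (f ⁻¹' U)

/-- A set is an *Fσ-set* if it is a countable union of closed sets. -/
def IsFsigma {X : Type*} [TopologicalSpace X] (s : Set X) : Prop :=
  ∃ C : Set (Set X), C.Countable ∧ (∀ c ∈ C, IsClosed c) ∧ s = ⋃₀ C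

/-- A map `f : X → Y` is *Fσ-measurable* if the preimage of every open set is an
`Fσ`-set. -/
def FsigmaMeasurable {X Y : Type*} [TopologicalSpace X] [TopologicalSpace Y]
    (f : X → Y) : Prop :=
  ∀ U : Set Y, IsOpen U → IsFsigma (f ⁻¹' U)

section Fsigma

variable {X : Type*} [TopologicalSpace X]

theorem isFsigma_iUnion_closed {ι : Type*} [Countable ι] {F : ι → Set X}
    (hF : ∀ i, IsClosed (F i)) : IsFsigma (⋃ i, F i) :=
  ⟨range F, countable_range F, by rintro _ ⟨i, rfl⟩; exact hF i, sUnion_range F |>.symm⟩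

theorem IsFsigma.exists_seq {s : Set X} (h : IsFsigma s) :
    ∃ F : ℕ → Set X, (∀ n, IsClosed (F n)) ∧ s = ⋃ n, F n := by
  obtain ⟨C, hC, hcl, rfl⟩ := h
  obtain ⟨F, hF⟩ := (hC.insert ∅).exists_eq_range (insert_nonempty _ _)
  refine ⟨F, fun n => ?_, ?_⟩
  · have : F n ∈ insert ∅ C := hF ▸ mem_range_self n
    rcases this with h | h
    · rw [h]; exact isClosed_empty
    · exact hcl _ h
  · rw [← sUnion_range, ← hF, sUnion_insert, empty_union]

theorem IsFsigma.iUnion {ι : Type*} [Countable ι] {s : ι → Set X} (h : ∀ i, IsFsigma (s i)) :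
    IsFsigma (⋃ i, s i) := by
  choose F hF hs using fun i => (h i).exists_seq
  have : (⋃ i, s i) = ⋃ p : ι × ℕ, F p.1 p.2 := by
    rw [iUnion_prod']
    exact iUnion_congr hs
  rw [this]
  exact isFsigma_iUnion_closed fun p => hF _ _

theorem IsFsigma.union {s t : Set X} (hs : IsFsigma s) (ht : IsFsigma t) : IsFsigma (s ∪ t) := by
  rw [union_eq_iUnion]
  exact IsFsigma.iUnion (Bool.forall_bool.2 ⟨ht, hs⟩)

theorem IsClosed.isFsigma {s : Set X} (hs : IsClosed s) : IsFsigma s :=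
  ⟨{s}, countable_singleton s, by simpa using hs, by simp⟩

theorem IsFsigma.inter {s t : Set X} (hs : IsFsigma s) (ht : IsFsigma t) : IsFsigma (s ∩ t) := by
  obtain ⟨F, hF, rfl⟩ := hs.exists_seq
  obtain ⟨G, hG, rfl⟩ := ht.exists_seq
  rw [iUnion_inter_iUnion]
  exact IsFsigma.iUnion fun i => IsFsigma.iUnion fun j => ((hF i).inter (hG j)).isFsigma

/-- In a perfect space, open sets are `Fσ`. -/
theorem isFsigma_of_isOpen (hperf : ∀ C : Set X, IsClosed C → IsGδ C) {O : Set X}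
    (hO : IsOpen O) : IsFsigma O := by
  obtain ⟨g, hg, h⟩ := isGδ_iff_eq_iInter_nat.1 (hperf _ hO.isClosed_compl)
  rw [← compl_compl O, h, compl_iInter]
  exact isFsigma_iUnion_closed fun n => (hg n).isClosed_compl

/-- If `A` has `Fσ` trace on each member of a family of open sets, then it has `Fσ` trace on a
closed set covered by that family: the `Fσ` traces on a locally finite open refinement may be
assembled piece by piece, since the union of a locally finite family of closed sets is closed. -/
theorem isFsigma_inter_of_cover [ParacompactSpace X]
    (hperf : ∀ C : Set X, IsClosed C → IsGδ C) {A F : Set X} (hF : IsClosed F)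
    {S : Set (Set X)} (hS : ∀ O ∈ S, IsOpen O ∧ IsFsigma (A ∩ O)) (hFS : F ⊆ ⋃₀ S) :
    IsFsigma (A ∩ F) := by
  obtain ⟨v, hvo, hFv, hvf, hvS⟩ := precise_refinement_set hF (fun O : S => (O : Set X))
    (fun O => (hS O O.2).1) (by rwa [← sUnion_eq_iUnion])
  have h1 : ∀ O : S, IsFsigma (A ∩ v O) := fun O => by
    have : A ∩ v O = (A ∩ O) ∩ v O := by
      rw [inter_assoc, inter_eq_self_of_subset_right (hvS O)]
    rw [this]
    exact (hS O O.2).2.inter (isFsigma_of_isOpen hperf (hvo O))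
  choose K hK hAK using fun O => (h1 O).exists_seq
  have h2 : A ∩ F = ⋃ n, (F ∩ ⋃ O, K O n) := by
    rw [← inter_iUnion, iUnion_comm]
    simp_rw [← hAK]
    rw [← inter_iUnion]
    ext x
    constructor
    · exact fun ⟨ha, hx⟩ => ⟨hx, ha, hFv hx⟩
    · exact fun ⟨hx, ha, _⟩ => ⟨ha, hx⟩
  rw [h2]
  refine isFsigma_iUnion_closed fun n => hF.inter ?_
  refine LocallyFinite.isClosed_iUnion (hvf.subset fun O => ?_) fun O => hK O n
  exact (subset_iUnion (K O) n).trans ((hAK O).symm.subset.trans inter_subset_right)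

theorem isFsigma_inter_sUnion [ParacompactSpace X]
    (hperf : ∀ C : Set X, IsClosed C → IsGδ C) {A : Set X}
    {S : Set (Set X)} (hS : ∀ O ∈ S, IsOpen O ∧ IsFsigma (A ∩ O)) :
    IsFsigma (A ∩ ⋃₀ S) := by
  obtain ⟨F, hF, h⟩ :=
    (isFsigma_of_isOpen hperf (isOpen_sUnion fun O hO => (hS O hO).1)).exists_seq
  rw [h, inter_iUnion]
  exact IsFsigma.iUnion fun n =>
    isFsigma_inter_of_cover hperf (hF n) hS (h ▸ subset_iUnion F n)

/-- In a perfectly paracompact space every resolvable set is `Fσ`. -/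
theorem isFsigma_of_resolvable [ParacompactSpace X]
    (hperf : ∀ C : Set X, IsClosed C → IsGδ C) {A : Set X}
    (hA : ∀ Z : Set X, IsClosed Z → Z.Nonempty →
      ∃ O, IsOpen O ∧ (Z ∩ O).Nonempty ∧ (Z ∩ O ⊆ A ∨ Disjoint (Z ∩ O) A)) :
    IsFsigma A := by
  let S : Set (Set X) := {O | IsOpen O ∧ IsFsigma (A ∩ O)}
  have hS : ∀ O ∈ S, IsOpen O ∧ IsFsigma (A ∩ O) := fun O h => h
  have hG : IsOpen (⋃₀ S) := isOpen_sUnion fun O hO => (hS O hO).1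
  have hAG := isFsigma_inter_sUnion hperf hS
  rcases eq_empty_or_nonempty (⋃₀ S)ᶜ with h | h
  · rw [compl_empty_iff] at h
    rwa [h, inter_univ] at hAG
  exfalso
  obtain ⟨O, hO, ⟨z, hzG, hzO⟩, hOA⟩ := hA _ hG.isClosed_compl h
  refine hzG ⟨O, ⟨hO, ?_⟩, hzO⟩
  have hO' := isFsigma_of_isOpen hperf hO
  have h1 : A ∩ O = ((A ∩ ⋃₀ S) ∩ O) ∪ (A ∩ ((⋃₀ S)ᶜ ∩ O)) := by
    ext x; simp only [mem_inter_iff, mem_union, mem_compl_iff]; tauto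
  rw [h1]
  refine (hAG.inter hO').union ?_
  rcases hOA with h | h
  · rw [inter_eq_self_of_subset_right h]
    exact hG.isClosed_compl.isFsigma.inter hO'
  · rw [h.symm.inter_eq]
    exact isClosed_empty.isFsigma

end Fsigma

/-- Dependent choice along `ℕ`, where each choice may refer to all earlier ones. -/
theorem exists_seq_of_forall_lt {α : Type*} (P : (n : ℕ) → ((m : ℕ) → m < n → α) → α → Prop)
    (h : ∀ n g, ∃ a, P n g a) : ∃ x : ℕ → α, ∀ n, P n (fun m _ => x m) (x n) := by
  choose c hc using h
  refine ⟨WellFoundedLT.fix c, fun n => ?_⟩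
  have := hc n (fun m _ => WellFoundedLT.fix c m)
  rwa [← WellFoundedLT.fix_eq c n] at this

/-- The preimage of an open set under a `Gδ`-measurable map is resolvable. -/
theorem exists_open_piece
    {X Y : Type*} [TopologicalSpace X] [TopologicalSpace Y] [RegularSpace Y]
    (hhb : ∀ C : Set X, IsClosed C → BaireSpace C)
    (hps : PreissSimonSpace X)
    {f : X → Y} (hf : GdeltaMeasurable f) {U : Set Y} (hU : IsOpen U)
    (Z : Set X) (hZ : IsClosed Z) (hne : Z.Nonempty) :
    ∃ O, IsOpen O ∧ (Z ∩ O).Nonempty ∧ (Z ∩ O ⊆ f ⁻¹' U ∨ Disjoint (Z ∩ O) (f ⁻¹' U)) := by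
  by_contra! hcon
  have hA : ∀ O, IsOpen O → (Z ∩ O).Nonempty → ∃ z ∈ Z ∩ O, f z ∈ U := fun O hO h => by
    obtain ⟨z, hz, hz'⟩ := not_disjoint_iff.1 (hcon O hO h).2
    exact ⟨z, hz, hz'⟩
  have hB : ∀ O, IsOpen O → (Z ∩ O).Nonempty → ∃ z ∈ Z ∩ O, f z ∉ U := fun O hO h =>
    not_subset.1 (hcon O hO h).1
  have : BaireSpace Z := hhb Z hZ
  have hresA : {z : Z | f z ∈ U} ∈ residual Z := by
    refine residual_of_dense_Gδ (IsGδ.preimage (s := f ⁻¹' U) continuous_subtype_val (hf U hU)) ?_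
    refine dense_iff_inter_open.2 ?_
    rintro _ ⟨O, hO, rfl⟩ ⟨z, hz⟩
    obtain ⟨w, ⟨hwZ, hwO⟩, hw⟩ := hA O hO ⟨z, z.2, hz⟩
    exact ⟨⟨w, hwZ⟩, hwO, hw⟩
  have hresV : ∀ V : Set Y, closure V ⊆ U → {z : Z | f z ∈ (closure V)ᶜ} ∈ residual Z := by
    intro V hV
    refine residual_of_dense_Gδ
      (IsGδ.preimage (s := f ⁻¹' (closure V)ᶜ) continuous_subtype_val
        (hf _ isClosed_closure.isOpen_compl)) ?_
    refine dense_iff_inter_open.2 ?_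
    rintro _ ⟨O, hO, rfl⟩ ⟨z, hz⟩
    obtain ⟨w, ⟨hwZ, hwO⟩, hw⟩ := hB O hO ⟨z, z.2, hz⟩
    exact ⟨⟨w, hwZ⟩, hwO, fun h => hw (hV h)⟩
  -- `W z` is a sequence of non-empty open subsets of `Z` (traces of open sets) converging to `z`.
  have hW : ∀ z : Z, ∃ W : ℕ → Set X, (∀ k, IsOpen (W k) ∧ (Z ∩ W k).Nonempty) ∧
      ∀ N ∈ 𝓝 (z : X), ∃ k, ∀ j ≥ k, Z ∩ W j ⊆ N := by
    intro z
    obtain ⟨T, hT, hconv⟩ := hps z Z (subset_closure z.2)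
    choose hTne _ W hWo hTW using hT
    refine ⟨W, fun k => ⟨hWo k, hTW k ▸ hTne k⟩, fun N hN => ?_⟩
    obtain ⟨k, hk⟩ := hconv N hN
    exact ⟨k, fun j hj => hTW j ▸ hk j hj⟩
  choose W hWo hWconv using hW
  let α := {p : Z × Set Y // IsOpen p.2 ∧ f p.1 ∈ p.2 ∧ closure p.2 ⊆ U}
  obtain ⟨x, hx⟩ := exists_seq_of_forall_lt (α := α)
    (fun n g a => (∀ m (h : m < n), Disjoint (g m h).1.2 a.1.2) ∧
      ∀ n' (h : n = n' + 1), (a.1.1 : X) ∈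
        W (g n'.unpair.1 (by have := n'.unpair_left_le; omega)).1.1 n'.unpair.2) (by
    intro n g
    have key : ∀ O : Set X, IsOpen O → (Z ∩ O).Nonempty →
        ∃ a : α, (∀ m (h : m < n), Disjoint (g m h).1.2 a.1.2) ∧ (a.1.1 : X) ∈ O := by
      intro O hO ⟨z, hzZ, hzO⟩
      have hres : {z : Z | f z ∈ U} ∩
          ⋂ i : Fin n, {z : Z | f z ∈ (closure (g i i.2).1.2)ᶜ} ∈ residual Z :=
        Filter.inter_mem hresA
          (countable_iInter_mem.2 fun i => hresV _ (g i i.2).2.2.2)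
      obtain ⟨w, hwO, hwU, hwV⟩ := (dense_of_mem_residual hres).inter_open_nonempty
        (Subtype.val ⁻¹' O) (hO.preimage continuous_subtype_val) ⟨⟨z, hzZ⟩, hzO⟩
      have hopen : IsOpen (U ∩ ⋂ i : Fin n, (closure (g i i.2).1.2)ᶜ) :=
        hU.inter (isOpen_iInter_of_finite fun i => isClosed_closure.isOpen_compl)
      have hmem : f w ∈ U ∩ ⋂ i : Fin n, (closure (g i i.2).1.2)ᶜ :=
        ⟨hwU, mem_iInter.2 fun i => mem_iInter.1 hwV i⟩
      obtain ⟨t, ht, htc, hts⟩ := exists_mem_nhds_isClosed_subset (hopen.mem_nhds hmem)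
      refine ⟨⟨(w, interior t), isOpen_interior, mem_interior_iff_mem_nhds.2 ht,
        (closure_minimal interior_subset htc).trans (hts.trans inter_subset_left)⟩, ?_, hwO⟩
      intro m h
      refine disjoint_left.2 fun y hy hyt => ?_
      exact mem_iInter.1 (hts (interior_subset hyt)).2 ⟨m, h⟩ (subset_closure hy)
    rcases n with _ | n
    · obtain ⟨a, ha, -⟩ := key univ isOpen_univ (by simpa using hne)
      exact ⟨a, ha, fun n' h => by omega⟩
    · obtain ⟨a, ha, haW⟩ := key
        (W (g n.unpair.1 (by have := n.unpair_left_le; omega)).1.1 n.unpair.2)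
        (hWo _ _).1 (hWo _ _).2
      refine ⟨a, ha, fun n' h => ?_⟩
      obtain rfl : n = n' := by omega
      exact haW)
  let d : ℕ → X := fun n => (x n).1.1
  let V : ℕ → Set Y := fun n => (x n).1.2
  have hVo : ∀ n, IsOpen (V n) := fun n => (x n).2.1
  have hdV : ∀ n, f (d n) ∈ V n := fun n => (x n).2.2.1
  have hVdisj : ∀ m n, m < n → Disjoint (V m) (V n) := fun m n h => (hx n).1 m h
  have hdW : ∀ m k, d (Nat.pair m k + 1) ∈ W (x m).1.1 k := fun m k => by
    have := (hx (Nat.pair m k + 1)).2 _ rfl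
    simpa only [Nat.unpair_pair] using this
  let C : Set X := closure (range d)
  have : BaireSpace C := hhb C isClosed_closure
  have : Nonempty C := ⟨⟨d 0, subset_closure (mem_range_self 0)⟩⟩
  -- The class `I b` consists of the indices whose Preiss-Simon task has parity `b`.
  let I : ℕ → Set ℕ := fun b => {n | ∃ m k, n = Nat.pair m (2 * k + b) + 1}
  let E : ℕ → Set Y := fun b => ⋃ n ∈ I b, V n
  have hE : ∀ b, IsOpen (E b) := fun b => isOpen_biUnion fun n _ => hVo n
  have hGδ : ∀ b, IsGδ {c : C | f c ∈ E b} := fun b =>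
    IsGδ.preimage (s := f ⁻¹' E b) continuous_subtype_val (hf _ (hE b))
  have hdense : ∀ b, Dense {c : C | f c ∈ E b} := by
    intro b
    refine dense_iff_inter_open.2 ?_
    rintro _ ⟨O, hO, rfl⟩ ⟨c, hc⟩
    obtain ⟨_, hmO, m, rfl⟩ := mem_closure_iff.1 c.2 O hO hc
    obtain ⟨k, hk⟩ := hWconv (x m).1.1 O (hO.mem_nhds hmO)
    refine ⟨⟨d (Nat.pair m (2 * k + b) + 1), subset_closure (mem_range_self _)⟩, ?_, ?_⟩
    · exact hk (2 * k + b) (by omega) ⟨(x _).1.1.2, hdW _ _⟩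
    · exact mem_biUnion (show _ ∈ I b from ⟨m, k, rfl⟩) (hdV _)
  obtain ⟨c, hc0, hc1⟩ := ((hdense 0).inter_of_Gδ (hGδ 0) (hGδ 1) (hdense 1)).nonempty
  obtain ⟨n, ⟨m, k, hn⟩, hcn⟩ := mem_iUnion₂.1 hc0
  obtain ⟨n', ⟨m', k', hn'⟩, hcn'⟩ := mem_iUnion₂.1 hc1
  rcases lt_trichotomy n n' with h | h | h
  · exact disjoint_left.1 (hVdisj _ _ h) hcn hcn'
  · have h1 : Nat.pair m (2 * k + 0) = Nat.pair m' (2 * k' + 1) := by omega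
    have := (Nat.pair_eq_pair.1 h1).2
    omega
  · exact disjoint_left.1 (hVdisj _ _ h) hcn' hcn

theorem fsigmaMeasurable_of_gdeltaMeasurable
    {X Y : Type*} [TopologicalSpace X] [TopologicalSpace Y]
    [ParacompactSpace X] [RegularSpace Y] [T2Space Y]
    (hperf : ∀ C : Set X, IsClosed C → IsGδ C)
    (hhb : ∀ C : Set X, IsClosed C → BaireSpace C)
    (hps : PreissSimonSpace X)
    (f : X → Y) (hf : GdeltaMeasurable f) :
    FsigmaMeasurable f := fun _ hU =>
  isFsigma_of_resolvable hperf (exists_open_piece hhb hps hf hU)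
end
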